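/- There exist constants 0 < c_G ≤ C_G such that for every μ ∈ [0,1] there exist a symmetric positive definite matrix G ∈ ℝ^{2×2} with all eigenvalues in [c_G, C_G] and a vector γ = (γ0, γ1, γ2) ∈ ℝ³ such that for every real inner product space X, every sequence (yⁿ)_{n∈ℤ} in X, and every n: ⟪(yⁿ − yⁿ⁻¹) + μ(yⁿ⁻¹ − yⁿ⁻²), yⁿ⟫ = ‖(yⁿ, yⁿ⁻¹)‖²_G − ‖(yⁿ⁻¹, yⁿ⁻²)‖²_G + ‖γ0·yⁿ + γ1·yⁿ⁻¹ + γ2·yⁿ⁻²‖². (That is, the summation assumption with multiplier η = 0 holds for k = δ = 1 whenever the coupling strength ω ≤ 1.) -/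

import Mathlib

/-!
Every filter `(γ₀, γ₁, γ₂)` satisfies a telescoping identity: adding to
`‖γ₀ • a + γ₁ • b + γ₂ • c‖²` the expression `‖γ₁ • a + γ₂ • b‖² + ‖γ₂ • a‖²` and subtracting its
shift by one step cancels all terms that do not involve `a`, and leaves the inner product with `a`
of a combination of `a, b, c` whose coefficients are autocorrelations of `γ`. It therefore suffices
to factor the scheme with coefficients `1, μ - 1, -μ` spectrally: `γ` must have autocorrelations
`1, (μ - 1) / 2, -μ / 2`. This means `γ₁ = -(γ₀ + γ₂)`, `(γ₀ + γ₂)² = (1 - μ) / 2` and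
`(γ₂ - γ₀)² = (1 + 3 * μ) / 2`, which has real solutions exactly for `-1 / 3 ≤ μ ≤ 1`. The matrix
`G` is the Gram matrix of a Hankel matrix of determinant `-γ₂²`; giving `γ₂` the larger modulus of
`γ₀, γ₂` keeps `det G`, and with it the spectrum of `G`, away from zero.
-/

open scoped BigOperators RealInnerProductSpace

/-- The weighted "norm" `‖Y‖²_G = Σ_{i,j} G_{ij} ⟪y_i, y_j⟫` associated with a
matrix `G` and a tuple `Y` in a real inner product space. -/
noncomputable def gnormSq {X : Type*} [NormedAddCommGroup X] [InnerProductSpace ℝ X]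
    {s : ℕ} (G : Matrix (Fin s) (Fin s) ℝ) (Y : Fin s → X) : ℝ :=
  ∑ i : Fin s, ∑ j : Fin s, G i j * ⟪Y i, Y j⟫

section Eigenvalues

open scoped ComplexOrder

variable {𝕜 n : Type*} [RCLike 𝕜] [Fintype n] [DecidableEq n] {A : Matrix n n 𝕜}

lemma eigenvalues_le_re_trace (hA : A.PosSemidef) (i : n) :
    hA.isHermitian.eigenvalues i ≤ RCLike.re A.trace := by
  simp only [hA.isHermitian.trace_eq_sum_eigenvalues, map_sum, RCLike.ofReal_re]
  exact Finset.single_le_sum (fun j _ ↦ hA.eigenvalues_nonneg j) (Finset.mem_univ i)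

lemma re_det_le_eigenvalues_mul_re_trace_pow (hA : A.PosSemidef) (i : n) :
    RCLike.re A.det ≤
      hA.isHermitian.eigenvalues i * RCLike.re A.trace ^ (Fintype.card n - 1) := by
  rw [hA.isHermitian.det_eq_prod_eigenvalues, ← RCLike.ofReal_prod, RCLike.ofReal_re,
    ← Finset.mul_prod_erase _ _ (Finset.mem_univ i), ← Finset.card_univ,
    ← Finset.card_erase_of_mem (Finset.mem_univ i), ← Finset.prod_const]
  gcongr with j
  · exact hA.eigenvalues_nonneg i
  · exact fun j _ ↦ hA.eigenvalues_nonneg j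
  · exact eigenvalues_le_re_trace hA j

end Eigenvalues

section Telescoping

variable {X : Type*} [NormedAddCommGroup X] [InnerProductSpace ℝ X]

lemma gnormSq_transpose_mul_self {m : Type*} [Fintype m] {s : ℕ} (L : Matrix m (Fin s) ℝ)
    (Y : Fin s → X) : gnormSq (L.transpose * L) Y = ∑ k, ‖∑ i, L k i • Y i‖ ^ 2 := by
  simp only [gnormSq, Matrix.mul_apply, Matrix.transpose_apply, ← real_inner_self_eq_norm_sq,
    sum_inner, inner_sum, real_inner_smul_left, real_inner_smul_right, Finset.sum_mul]
  rw [Finset.sum_comm (γ := m)]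
  refine Finset.sum_congr rfl fun i _ ↦ ?_
  rw [Finset.sum_comm]
  exact Finset.sum_congr rfl fun k _ ↦ Finset.sum_congr rfl fun j _ ↦ by
    rw [real_inner_comm]
    ring

/-- The matrix `G` whose weighted norm telescopes for the filter `(γ₀, γ₁, γ₂)`, written as a Gram
matrix. It does not involve `γ₀` because only `γ₁` and `γ₂` act on past values. -/
def hankelGram (γ₁ γ₂ : ℝ) : Matrix (Fin 2) (Fin 2) ℝ :=
  !![γ₁, γ₂; γ₂, 0].transpose * !![γ₁, γ₂; γ₂, 0]

lemma gnormSq_hankelGram (γ₁ γ₂ : ℝ) (a b : X) :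
    gnormSq (hankelGram γ₁ γ₂) ![a, b] = ‖γ₁ • a + γ₂ • b‖ ^ 2 + ‖γ₂ • a‖ ^ 2 := by
  simp [hankelGram, gnormSq_transpose_mul_self]

lemma inner_autocorrelation_eq_gnormSq_sub_add_norm_sq (γ₀ γ₁ γ₂ : ℝ) (a b c : X) :
    ⟪(γ₀ ^ 2 + γ₁ ^ 2 + γ₂ ^ 2) • a + (2 * (γ₀ * γ₁ + γ₁ * γ₂)) • b + (2 * (γ₀ * γ₂)) • c, a⟫ =
      gnormSq (hankelGram γ₁ γ₂) ![a, b] - gnormSq (hankelGram γ₁ γ₂) ![b, c]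
        + ‖γ₀ • a + γ₁ • b + γ₂ • c‖ ^ 2 := by
  simp only [gnormSq_hankelGram, ← real_inner_self_eq_norm_sq, inner_add_left, inner_add_right,
    real_inner_smul_left, real_inner_smul_right]
  rw [real_inner_comm a b, real_inner_comm a c, real_inner_comm b c]
  ring

end Telescoping

lemma det_hankelGram (γ₁ γ₂ : ℝ) : (hankelGram γ₁ γ₂).det = (γ₂ ^ 2) ^ 2 := by
  simp only [hankelGram, Matrix.det_mul, Matrix.det_transpose, Matrix.det_fin_two_of]
  ring

lemma trace_hankelGram (γ₁ γ₂ : ℝ) : (hankelGram γ₁ γ₂).trace = γ₁ ^ 2 + 2 * γ₂ ^ 2 := by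
  simp only [hankelGram, Matrix.trace_fin_two, Matrix.mul_apply, Matrix.transpose_apply,
    Matrix.of_apply, Matrix.cons_val', Matrix.cons_val_zero, Matrix.cons_val_fin_one,
    Fin.sum_univ_two, Matrix.cons_val_one]
  ring

lemma posSemidef_hankelGram (γ₁ γ₂ : ℝ) : (hankelGram γ₁ γ₂).PosSemidef :=
  Matrix.posSemidef_conjTranspose_mul_self _

lemma posDef_hankelGram (γ₁ : ℝ) {γ₂ : ℝ} (hγ₂ : γ₂ ≠ 0) : (hankelGram γ₁ γ₂).PosDef := by
  rw [(posSemidef_hankelGram γ₁ γ₂).posDef_iff_det_ne_zero, det_hankelGram]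
  positivity

lemma eigenvalues_hankelGram_mem_Icc {γ₁ γ₂ : ℝ} (hγ : γ₁ ^ 2 + γ₂ ^ 2 ≤ 1) (i : Fin 2) :
    (posSemidef_hankelGram γ₁ γ₂).isHermitian.eigenvalues i ∈ Set.Icc ((γ₂ ^ 2) ^ 2 / 2) 2 := by
  have hG := posSemidef_hankelGram γ₁ γ₂
  have trace_le : (hankelGram γ₁ γ₂).trace ≤ 2 := by
    rw [trace_hankelGram]
    linarith [sq_nonneg γ₁]
  have det_le : (γ₂ ^ 2) ^ 2 ≤ hG.isHermitian.eigenvalues i * (hankelGram γ₁ γ₂).trace := by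
    simpa [det_hankelGram] using re_det_le_eigenvalues_mul_re_trace_pow hG i
  refine ⟨?_, (eigenvalues_le_re_trace hG i).trans trace_le⟩
  have det_le_two_mul : (γ₂ ^ 2) ^ 2 ≤ hG.isHermitian.eigenvalues i * 2 :=
    det_le.trans (mul_le_mul_of_nonneg_left trace_le (hG.eigenvalues_nonneg i))
  linarith

lemma exists_autocorrelation_eq {μ : ℝ} (hμ : μ ∈ Set.Icc (-1 / 3 : ℝ) 1) :
    ∃ γ₀ γ₁ γ₂ : ℝ, γ₀ ^ 2 + γ₁ ^ 2 + γ₂ ^ 2 = 1 ∧ 2 * (γ₀ * γ₁ + γ₁ * γ₂) = μ - 1 ∧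
      2 * (γ₀ * γ₂) = -μ ∧ 1 / 6 ≤ γ₂ ^ 2 := by
  obtain ⟨hμ_ge, hμ_le⟩ := hμ
  set p := √((1 - μ) / 2)
  set q := √((1 + 3 * μ) / 2)
  have hp : p ^ 2 = (1 - μ) / 2 := Real.sq_sqrt (by linarith)
  have hq : q ^ 2 = (1 + 3 * μ) / 2 := Real.sq_sqrt (by linarith)
  have hpq : 0 ≤ p * q := by positivity
  exact ⟨(p - q) / 2, -p, (p + q) / 2, by linarith, by linarith, by linarith, by linarith⟩

theorem summation_assumption_bdf1_general :
    ∃ cG CG : ℝ, 0 < cG ∧ cG ≤ CG ∧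
      ∀ μ ∈ Set.Icc (-1 / 3 : ℝ) 1,
        ∃ (G : Matrix (Fin 2) (Fin 2) ℝ) (hG : G.IsHermitian) (γ0 γ1 γ2 : ℝ),
          G.PosDef ∧
          (∀ i, hG.eigenvalues i ∈ Set.Icc cG CG) ∧
          ∀ (X : Type*) (_ : NormedAddCommGroup X) (_ : InnerProductSpace ℝ X)
            (y : ℤ → X) (n : ℤ),
            ⟪(y n - y (n - 1)) + μ • (y (n - 1) - y (n - 2)), y n⟫
              = gnormSq G ![y n, y (n - 1)] - gnormSq G ![y (n - 1), y (n - 2)]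
                + ‖γ0 • y n + γ1 • y (n - 1) + γ2 • y (n - 2)‖ ^ 2 := by
  refine ⟨1 / 72, 2, by norm_num, by norm_num, fun μ hμ ↦ ?_⟩
  obtain ⟨γ₀, γ₁, γ₂, hγ, hγ_one, hγ_two, hγ₂⟩ := exists_autocorrelation_eq hμ
  have hG : (hankelGram γ₁ γ₂).PosDef := posDef_hankelGram γ₁ (by rintro rfl; norm_num at hγ₂)
  have lower_bound : (1 / 72 : ℝ) ≤ (γ₂ ^ 2) ^ 2 / 2 := by nlinarith
  refine ⟨_, hG.isHermitian, γ₀, γ₁, γ₂, hG, fun i ↦ ?_, fun X _ _ y n ↦ ?_⟩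
  · exact Set.Icc_subset_Icc_left lower_bound
      (eigenvalues_hankelGram_mem_Icc (by linarith [sq_nonneg γ₀]) i)
  · rw [← inner_autocorrelation_eq_gnormSq_sub_add_norm_sq, hγ, hγ_one, hγ_two]
    congr 1
    module

/-- **The summation assumption holds for `k = δ = 1` with multiplier `η = 0`
whenever the coupling strength `ω ≤ 1`.**
There are constants `0 < c_G ≤ C_G` such that for every `μ ∈ [0,1]` there is a
symmetric positive definite `2×2` matrix `G` with all eigenvalues in `[c_G, C_G]`,
and a vector `γ`, realizing the telescoping identity for every sequence in every
real inner product space. -/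
theorem summation_assumption_bdf1 :
    ∃ cG CG : ℝ, 0 < cG ∧ cG ≤ CG ∧
      ∀ μ ∈ Set.Icc (0 : ℝ) 1,
        ∃ (G : Matrix (Fin 2) (Fin 2) ℝ) (hG : G.IsHermitian) (γ0 γ1 γ2 : ℝ),
          G.PosDef ∧
          (∀ i, hG.eigenvalues i ∈ Set.Icc cG CG) ∧
          ∀ (X : Type) (_ : NormedAddCommGroup X) (_ : InnerProductSpace ℝ X)
            (y : ℤ → X) (n : ℤ),
            ⟪(y n - y (n - 1)) + μ • (y (n - 1) - y (n - 2)), y n⟫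
              = gnormSq G ![y n, y (n - 1)] - gnormSq G ![y (n - 1), y (n - 2)]
                + ‖γ0 • y n + γ1 • y (n - 1) + γ2 • y (n - 2)‖ ^ 2 := by
  obtain ⟨cG, CG, hcG, hle, h⟩ := summation_assumption_bdf1_general
  exact ⟨cG, CG, hcG, hle, fun μ hμ ↦ h μ (Set.Icc_subset_Icc_left (by norm_num) hμ)⟩
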